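/- Let ε ∈ (0, 1), β ≥ 0, let S be a finite index set with |S| = d_c − 1 for some integer d_c ≥ 2, let (B_j)_{j∈S} be real numbers with |B_j| ≤ 1 − ε for all j ∈ S, let k ∈ S with B_k ≠ 0, and set u = β·∏_{j∈S} B_j. Assume β·(1 − ε)^{d_c − 1} < 1. Then the one-hop gain satisfies (1/2) · ( 2|u| / ((1 − u²)·|B_k|) ) ≤ β·(1 − ε)^{d_c − 2} / (1 − β²·(1 − ε)^{2(d_c − 1)}). -/

import Mathlib

/-!
Factor `u = v * B k`, where `v = β * ∏ j ∈ S.erase k, B j`. The factor `|B k|` cancels from the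
gain, leaving `|v| / (1 - u ^ 2)`, which increases with both `|v|` and `|u|`. These are largest when
every message has the largest modulus allowed.
-/

section OrderedField

variable {K : Type*} [Field K] [LinearOrder K] [IsStrictOrderedRing K]

theorem half_mul_two_mul_abs_mul_div (v d : K) {b : K} (hb : b ≠ 0) :
    1 / 2 * (2 * |v * b| / (d * |b|)) = |v| / d := by
  rw [abs_mul, ← mul_assoc, mul_div_mul_right _ _ (abs_ne_zero.mpr hb), mul_div_assoc, ← mul_assoc,
    one_div_mul_cancel two_ne_zero, one_mul]

theorem abs_div_one_sub_sq_le {v a u m : K} (hv : |v| ≤ a) (hu : |u| ≤ m) (hm : m < 1) :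
    |v| / (1 - u ^ 2) ≤ a / (1 - m ^ 2) := by
  have hu_sq : u ^ 2 ≤ m ^ 2 := sq_le_sq' (neg_le_of_abs_le hu) (le_of_abs_le hu)
  have hm_sq : m ^ 2 < 1 := pow_lt_one₀ ((abs_nonneg u).trans hu) hm two_ne_zero
  exact div_le_div₀ ((abs_nonneg v).trans hv) hv (sub_pos.mpr hm_sq) (sub_le_sub_left hu_sq 1)

variable {ι : Type*} {S : Finset ι} {B r : ι → K}

theorem abs_mul_prod_le (β : K) (hB : ∀ j ∈ S, |B j| ≤ r j) :
    |β * ∏ j ∈ S, B j| ≤ |β| * ∏ j ∈ S, r j := by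
  rw [abs_mul, Finset.abs_prod]
  exact mul_le_mul_of_nonneg_left (Finset.prod_le_prod (fun j _ => abs_nonneg (B j)) hB)
    (abs_nonneg β)

theorem one_hop_gain_bound_general [DecidableEq ι] (β : K) (hB : ∀ j ∈ S, |B j| ≤ r j)
    {k : ι} (hk : k ∈ S) (hBk : B k ≠ 0) {u : K} (hu : u = β * ∏ j ∈ S, B j)
    (hsmall : |β| * ∏ j ∈ S, r j < 1) :
    1 / 2 * (2 * |u| / ((1 - u ^ 2) * |B k|)) ≤
      (|β| * ∏ j ∈ S.erase k, r j) / (1 - (|β| * ∏ j ∈ S, r j) ^ 2) := by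
  set v := β * ∏ j ∈ S.erase k, B j with hv
  have hv_le : |v| ≤ |β| * ∏ j ∈ S.erase k, r j :=
    abs_mul_prod_le β fun j hj => hB j (Finset.mem_of_mem_erase hj)
  have hu_le : |u| ≤ |β| * ∏ j ∈ S, r j := hu ▸ abs_mul_prod_le β hB
  have hu_eq : u = v * B k := by rw [hu, hv, mul_assoc, Finset.prod_erase_mul S B hk]
  calc
    1 / 2 * (2 * |u| / ((1 - u ^ 2) * |B k|))
      = 1 / 2 * (2 * |v * B k| / ((1 - u ^ 2) * |B k|)) := by rw [← hu_eq]
    _ = |v| / (1 - u ^ 2) := half_mul_two_mul_abs_mul_div v (1 - u ^ 2) hBk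
    _ ≤ (|β| * ∏ j ∈ S.erase k, r j) / (1 - (|β| * ∏ j ∈ S, r j) ^ 2) :=
      abs_div_one_sub_sq_le hv_le hu_le hsmall

end OrderedField

/-- The paper's per-entry Jacobian bound for one full BP iteration: the one-hop gain,
i.e. the code-node attenuation factor `1/2` times the magnitude
`2|u| / ((1 − u²)|B_k|)` of the generator-update derivative, is bounded by
`β (1−ε)^{d_c−2} / (1 − β² (1−ε)^{2(d_c−1)})`. -/
theorem one_hop_gain_bound
    {ι : Type*} (ε β : ℝ) (hε0 : 0 < ε) (hε1 : ε < 1) (hβ : 0 ≤ β)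
    (dc : ℕ) (hdc : 2 ≤ dc)
    (S : Finset ι) (hcard : S.card = dc - 1)
    (B : ι → ℝ) (hB : ∀ j ∈ S, |B j| ≤ 1 - ε)
    (k : ι) (hk : k ∈ S) (hBk : B k ≠ 0)
    (u : ℝ) (hu : u = β * ∏ j ∈ S, B j)
    (hsmall : β * (1 - ε) ^ (dc - 1) < 1) :
    (1 / 2) * (2 * |u| / ((1 - u ^ 2) * |B k|)) ≤
      β * (1 - ε) ^ (dc - 2) / (1 - β ^ 2 * (1 - ε) ^ (2 * (dc - 1))) := by
  classical
  simpa [abs_of_nonneg hβ, Finset.card_erase_of_mem hk, hcard, Nat.sub_sub, mul_pow, ← pow_mul',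
    hsmall] using one_hop_gain_bound_general β hB hk hBk hu
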